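/- Let p ∈ K²\{0} and ξ ∈ M_{2×4}(K)\{0}. Then the matrix σ₁(p,ξ) ∈ M₄(K) has the same rank as ξ and the same kernel as ξ (viewing both as linear maps on K⁴). In particular, σ₁(p,ξ) ∈ Z₁ ∩ Z₂ if and only if rank ξ = 1, and the same holds for σ₂(p,ξ). -/

import Mathlib

/-!
Writing `y = ξ x ∈ K²`, the vectors `σ₁(p,ξ) x` and `σ₂(p,ξ) x` are the tensors `p ⊗ y` and `y ⊗ p` in
`K² ⊗ K² = K⁴`. Since `p ≠ 0`, these vanish exactly when `y` does, which gives equality of kernels, and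
then of ranks by rank-nullity (`rank_eq_of_mulVec_eq_zero_iff`).

The tensor `p ⊗ y` always lies in the cone `A_p`, and it lies in `B_s` exactly when `y` is on the line
`s₁y₀ = s₀y₁`; for `y ⊗ p` the two rulings swap roles. So membership in `Z₁ ∩ Z₂` says that the image of
`ξ` is contained in a line of `K²`, i.e. `rank ξ ≤ 1` (`exists_line_iff_rank_eq_one`).
-/

variable {K : Type*} [Field K]

/-- Membership in the a-line cone `A_s = {x : s₁x₀ = s₀x₂ ∧ s₁x₁ = s₀x₃}`. -/
def memA (s : Fin 2 → K) (x : Fin 4 → K) : Prop :=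
  s 1 * x 0 = s 0 * x 2 ∧ s 1 * x 1 = s 0 * x 3

/-- Membership in the b-line cone `B_s = {x : s₁x₀ = s₀x₁ ∧ s₁x₂ = s₀x₃}`. -/
def memB (s : Fin 2 → K) (x : Fin 4 → K) : Prop :=
  s 1 * x 0 = s 0 * x 1 ∧ s 1 * x 2 = s 0 * x 3

/-- The Segre embedding `σ₁`: rows `(s₀t⁰, s₀t¹, s₁t⁰, s₁t¹)`. -/
def segre1 (s : Fin 2 → K) (t : Matrix (Fin 2) (Fin 4) K) :
    Matrix (Fin 4) (Fin 4) K :=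
  Matrix.of fun i j => s (![0, 0, 1, 1] i) * t (![0, 1, 0, 1] i) j

/-- The Segre embedding `σ₂`: rows `(s₀t⁰, s₁t⁰, s₀t¹, s₁t¹)`. -/
def segre2 (s : Fin 2 → K) (t : Matrix (Fin 2) (Fin 4) K) :
    Matrix (Fin 4) (Fin 4) K :=
  Matrix.of fun i j => s (![0, 1, 0, 1] i) * t (![0, 0, 1, 1] i) j

theorem rank_eq_of_mulVec_eq_zero_iff {m n l : Type*} [Fintype m] [Fintype n] [Fintype l]
    {M : Matrix m n K} {N : Matrix l n K} (h : ∀ x, M.mulVec x = 0 ↔ N.mulVec x = 0) :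
    M.rank = N.rank := by
  have hker : LinearMap.ker M.mulVecLin = LinearMap.ker N.mulVecLin := by
    ext x
    simpa using h x
  have hM := LinearMap.finrank_range_add_finrank_ker M.mulVecLin
  have hN := LinearMap.finrank_range_add_finrank_ker N.mulVecLin
  rw [hker] at hM
  unfold Matrix.rank
  omega

/-- A nonzero `2 × 4` matrix has rank one iff its image lies in a line `s₁y₀ = s₀y₁`, because such a
line amounts to a nonzero vector `(s₁, -s₀)` in the left kernel. -/
theorem exists_line_iff_rank_eq_one {ξ : Matrix (Fin 2) (Fin 4) K} (hξ : ξ ≠ 0) :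
    (∃ s : Fin 2 → K, s ≠ 0 ∧ ∀ w : Fin 4 → K, s 1 * ξ.mulVec w 0 = s 0 * ξ.mulVec w 1) ↔
      ξ.rank = 1 := by
  have hpos : ξ.rank ≠ 0 := by
    intro h
    rw [Matrix.rank, Submodule.finrank_eq_zero, LinearMap.range_eq_bot] at h
    refine hξ (Matrix.ext_of_mulVec_single fun j => ?_)
    rw [Matrix.zero_mulVec]
    exact LinearMap.congr_fun h (Pi.single j 1)
  have hnull := LinearMap.finrank_range_add_finrank_ker ξ.transpose.mulVecLin
  have hrk : Module.finrank K (LinearMap.range ξ.transpose.mulVecLin) = ξ.rank :=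
    Matrix.rank_transpose ξ
  rw [hrk, Module.finrank_fin_fun] at hnull
  have hker : ξ.rank = 1 ↔ LinearMap.ker ξ.transpose.mulVecLin ≠ ⊥ := by
    rw [Ne, ← Submodule.finrank_eq_zero]
    omega
  rw [hker, Submodule.ne_bot_iff]
  constructor
  · rintro ⟨s, hs, h⟩
    refine ⟨![s 1, -s 0], ?_, fun h0 => hs ?_⟩
    · rw [LinearMap.mem_ker, Matrix.mulVecLin_apply]
      ext j
      have hj := h (Pi.single j 1)
      simp only [Matrix.mulVec_single_one] at hj
      simp [Matrix.mulVec, dotProduct, Fin.sum_univ_two] at hj ⊢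
      linear_combination hj
    · have h1 := congrFun h0 0
      have h2 := congrFun h0 1
      ext i
      fin_cases i <;> simp_all
  · rintro ⟨v, hv, hv0⟩
    refine ⟨![-v 1, v 0], fun h0 => hv0 ?_, fun w => ?_⟩
    · have h1 := congrFun h0 0
      have h2 := congrFun h0 1
      ext i
      fin_cases i <;> simp_all
    · rw [LinearMap.mem_ker, Matrix.mulVecLin_apply, Matrix.mulVec_transpose] at hv
      have h := Matrix.dotProduct_mulVec v ξ w
      rw [hv, zero_dotProduct, dotProduct, Fin.sum_univ_two] at h
      simp only [Matrix.cons_val_zero, Matrix.cons_val_one]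
      linear_combination h

theorem segre1_mulVec (p : Fin 2 → K) (ξ : Matrix (Fin 2) (Fin 4) K) (x : Fin 4 → K) :
    (segre1 p ξ).mulVec x =
      ![p 0 * ξ.mulVec x 0, p 0 * ξ.mulVec x 1, p 1 * ξ.mulVec x 0, p 1 * ξ.mulVec x 1] := by
  ext i
  fin_cases i <;> simp [segre1, Matrix.mulVec, dotProduct, Finset.mul_sum, mul_assoc]

theorem segre2_mulVec (p : Fin 2 → K) (ξ : Matrix (Fin 2) (Fin 4) K) (x : Fin 4 → K) :
    (segre2 p ξ).mulVec x =
      ![p 0 * ξ.mulVec x 0, p 1 * ξ.mulVec x 0, p 0 * ξ.mulVec x 1, p 1 * ξ.mulVec x 1] := by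
  ext i
  fin_cases i <;> simp [segre2, Matrix.mulVec, dotProduct, Finset.mul_sum, mul_assoc]

theorem ne_zero_fin_two {p : Fin 2 → K} (hp : p ≠ 0) : p 0 ≠ 0 ∨ p 1 ≠ 0 := by
  by_contra! h
  exact hp (by ext i; fin_cases i <;> simp [h.1, h.2])

/-- A scalar equation holds as soon as it holds after multiplication by both coordinates of a
nonzero vector `p`; this cancels the factor `p` from the equations cutting out `A_s` and `B_s`. -/
theorem mul_cancel_pair {p : Fin 2 → K} (hp : p ≠ 0) (a b y z : K) :
    (a * (p 0 * y) = b * (p 0 * z) ∧ a * (p 1 * y) = b * (p 1 * z)) ↔ a * y = b * z := by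
  constructor
  · rintro ⟨h0, h1⟩
    rcases ne_zero_fin_two hp with h | h
    · exact mul_left_cancel₀ h (by linear_combination h0)
    · exact mul_left_cancel₀ h (by linear_combination h1)
  · intro h
    exact ⟨by linear_combination p 0 * h, by linear_combination p 1 * h⟩

theorem segre1_mulVec_eq_zero_iff {p : Fin 2 → K} (hp : p ≠ 0) (ξ : Matrix (Fin 2) (Fin 4) K)
    (x : Fin 4 → K) : (segre1 p ξ).mulVec x = 0 ↔ ξ.mulVec x = 0 := by
  rw [segre1_mulVec]
  have := ne_zero_fin_two hp
  simp only [funext_iff, Fin.forall_fin_succ]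
  simp
  tauto

theorem segre2_mulVec_eq_zero_iff {p : Fin 2 → K} (hp : p ≠ 0) (ξ : Matrix (Fin 2) (Fin 4) K)
    (x : Fin 4 → K) : (segre2 p ξ).mulVec x = 0 ↔ ξ.mulVec x = 0 := by
  rw [segre2_mulVec]
  have := ne_zero_fin_two hp
  simp only [funext_iff, Fin.forall_fin_succ]
  simp
  tauto

theorem memA_segre1 (p : Fin 2 → K) (ξ : Matrix (Fin 2) (Fin 4) K) (w : Fin 4 → K) :
    memA p ((segre1 p ξ).mulVec w) := by
  rw [segre1_mulVec]
  constructor <;> simp <;> ring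

theorem memB_segre2 (p : Fin 2 → K) (ξ : Matrix (Fin 2) (Fin 4) K) (w : Fin 4 → K) :
    memB p ((segre2 p ξ).mulVec w) := by
  rw [segre2_mulVec]
  constructor <;> simp <;> ring

theorem memB_segre1_iff {p : Fin 2 → K} (hp : p ≠ 0) (s : Fin 2 → K)
    (ξ : Matrix (Fin 2) (Fin 4) K) (w : Fin 4 → K) :
    memB s ((segre1 p ξ).mulVec w) ↔ s 1 * ξ.mulVec w 0 = s 0 * ξ.mulVec w 1 := by
  rw [segre1_mulVec]
  exact mul_cancel_pair hp _ _ _ _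

theorem memA_segre2_iff {p : Fin 2 → K} (hp : p ≠ 0) (s : Fin 2 → K)
    (ξ : Matrix (Fin 2) (Fin 4) K) (w : Fin 4 → K) :
    memA s ((segre2 p ξ).mulVec w) ↔ s 1 * ξ.mulVec w 0 = s 0 * ξ.mulVec w 1 := by
  rw [segre2_mulVec]
  exact mul_cancel_pair hp _ _ _ _

/-- `σ₁(p,ξ)` has the same rank and the same kernel as `ξ`; moreover
`σ₁(p,ξ) ∈ Z₁ ∩ Z₂` iff `ξ` has rank 1, and similarly for `σ₂`. -/
theorem segre_rank_ker [IsAlgClosed K] [CharZero K]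
    (p : Fin 2 → K) (ξ : Matrix (Fin 2) (Fin 4) K) (hp : p ≠ 0) (hξ : ξ ≠ 0) :
    (segre1 p ξ).rank = ξ.rank ∧
    (∀ x : Fin 4 → K, (segre1 p ξ).mulVec x = 0 ↔ ξ.mulVec x = 0) ∧
    (((∃ s : Fin 2 → K, s ≠ 0 ∧ ∀ w : Fin 4 → K, memA s ((segre1 p ξ).mulVec w)) ∧
       (∃ s : Fin 2 → K, s ≠ 0 ∧ ∀ w : Fin 4 → K, memB s ((segre1 p ξ).mulVec w))) ↔
      ξ.rank = 1) ∧
    (segre2 p ξ).rank = ξ.rank ∧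
    (∀ x : Fin 4 → K, (segre2 p ξ).mulVec x = 0 ↔ ξ.mulVec x = 0) ∧
    (((∃ s : Fin 2 → K, s ≠ 0 ∧ ∀ w : Fin 4 → K, memA s ((segre2 p ξ).mulVec w)) ∧
       (∃ s : Fin 2 → K, s ≠ 0 ∧ ∀ w : Fin 4 → K, memB s ((segre2 p ξ).mulVec w))) ↔
      ξ.rank = 1) := by
  refine ⟨rank_eq_of_mulVec_eq_zero_iff (segre1_mulVec_eq_zero_iff hp ξ),
    segre1_mulVec_eq_zero_iff hp ξ, ?_,
    rank_eq_of_mulVec_eq_zero_iff (segre2_mulVec_eq_zero_iff hp ξ),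
    segre2_mulVec_eq_zero_iff hp ξ, ?_⟩
  · rw [← exists_line_iff_rank_eq_one hξ, and_iff_right ⟨p, hp, memA_segre1 p ξ⟩]
    simp only [memB_segre1_iff hp]
  · rw [← exists_line_iff_rank_eq_one hξ, and_iff_left ⟨p, hp, memB_segre2 p ξ⟩]
    simp only [memA_segre2_iff hp]
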